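/- Let n ≥ 3, let L be a weighted Laplacian of a ring graph on n vertices, and let 1 ≤ k ≤ n. Then the minimum over all nonempty subsets S of the vertices with |S| ≤ k of (1/2)·tr(L_ff⁻¹) equals the minimum over all j ∈ {1,…,k} and all sets of j distinct vertices u₁, …, u_j listed in clockwise (cyclic) order (with u_{j+1} = u₁) of the quantity Σ_{i=1}^{j} (1/2)·tr(L_{(u_i→u_{i+1})}⁻¹). -/

import Mathlib

open Matrix

/-- `L` is a weighted Laplacian of a ring graph on `n + 3` (i.e. `≥ 3`) vertices,
with indices taken modulo `n + 3`. -/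
def IsRingLaplacian {n : ℕ} (L : Matrix (Fin (n + 3)) (Fin (n + 3)) ℝ) : Prop :=
  L.IsSymm ∧
  (∀ i j : Fin (n + 3), j = i + 1 ∨ j = i - 1 → L i j < 0) ∧
  (∀ i j : Fin (n + 3), i ≠ j → j ≠ i + 1 → j ≠ i - 1 → L i j = 0) ∧
  (∀ i : Fin (n + 3), ∑ j, L i j = 0)

/-- The index set of the cyclic segment `(u → v)`: the vertices strictly between `u` and
`v` in clockwise order (all vertices other than `u` when `v = u`). -/
def CSegIdx {N : ℕ} (u v : Fin N) : Type :=
  {w : Fin N // 0 < (w - u).val ∧ (v = u ∨ (w - u).val < (v - u).val)}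

instance {N : ℕ} (u v : Fin N) : Fintype (CSegIdx u v) := by
  unfold CSegIdx; infer_instance

instance {N : ℕ} (u v : Fin N) : DecidableEq (CSegIdx u v) := by
  unfold CSegIdx; infer_instance

/-- `L_{(u→v)}`: the principal submatrix of `L` on the vertices strictly between `u` and
`v` in clockwise order. -/
def cseg {N : ℕ} (L : Matrix (Fin N) (Fin N) ℝ) (u v : Fin N) :
    Matrix (CSegIdx u v) (CSegIdx u v) ℝ :=
  L.submatrix (·.val) (·.val)

/-- The grounded Laplacian `L_ff`. -/
def grounded {N : ℕ} (L : Matrix (Fin N) (Fin N) ℝ) (S : Finset (Fin N)) :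
    Matrix {i : Fin N // i ∉ S} {i : Fin N // i ∉ S} ℝ :=
  L.submatrix (·.val) (·.val)

open scoped Fin.CommRing Fin.NatCast in
lemma ring_max_principle {n : ℕ} (L : Matrix (Fin (n + 3)) (Fin (n + 3)) ℝ)
    (hL : IsRingLaplacian L) (y : Fin (n + 3) → ℝ) (s : Fin (n + 3)) (hs : y s = 0)
    (h : ∀ i, y i ≠ 0 → ∑ j, L i j * y j = 0) : ∀ i, y i ≤ 0 := by
  obtain ⟨-, hneg, hzero, hsum⟩ := hL
  obtain ⟨m, hm⟩ := Finite.exists_max y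
  by_contra! hcon
  obtain ⟨i0, hi0⟩ := hcon
  have hpos : 0 < y m := lt_of_lt_of_le hi0 (hm i0)
  have step : ∀ i, y i = y m → y (i + 1) = y m := by
    intro i hi
    have h1 := h i (by rw [hi]; exact hpos.ne')
    have h2 : ∑ j, L i j * (y j - y i) = 0 := by
      simp only [mul_sub, Finset.sum_sub_distrib, ← Finset.sum_mul, hsum i, h1]
      ring
    have h3 : ∀ j ∈ Finset.univ, 0 ≤ L i j * (y j - y i) := by
      intro j _
      by_cases hij : i = j
      · subst hij; simp
      have : L i j ≤ 0 := by
        by_cases hj : j = i + 1 ∨ j = i - 1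
        · exact (hneg i j hj).le
        · push Not at hj
          exact (hzero i j hij hj.1 hj.2).le
      have h5 : y j - y i ≤ 0 := by rw [hi]; linarith [hm j]
      exact mul_nonneg_of_nonpos_of_nonpos this h5
    have h4 := (Finset.sum_eq_zero_iff_of_nonneg h3).1 h2 (i + 1) (Finset.mem_univ _)
    have h6 := hneg i (i + 1) (Or.inl rfl)
    rcases mul_eq_zero.1 h4 with h7 | h7
    · exact absurd h7 h6.ne
    · linarith
  have all : ∀ k : ℕ, y (m + (k : Fin (n + 3))) = y m := by
    intro k
    induction k with
    | zero => simp
    | succ k ih =>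
      have := step _ ih
      rw [← this]
      congr 1
      push_cast
      ring
  have := all (s - m).val
  rw [Fin.cast_val_eq_self] at this
  rw [add_sub_cancel, hs] at this
  exact hpos.ne this

lemma ring_sub_isUnit {n : ℕ} (L : Matrix (Fin (n + 3)) (Fin (n + 3)) ℝ)
    (hL : IsRingLaplacian L) {ι : Type*} [Fintype ι] [DecidableEq ι] (f : ι → Fin (n + 3))
    (hf : Function.Injective f) (s : Fin (n + 3)) (hs : ∀ i, f i ≠ s) :
    IsUnit (L.submatrix f f).det := by
  rw [isUnit_iff_ne_zero]
  intro hdet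
  obtain ⟨x, hx0, hx⟩ := Matrix.exists_mulVec_eq_zero_iff.2 hdet
  have key : ∀ z : ι → ℝ, (L.submatrix f f) *ᵥ z = 0 → ∀ i, z i ≤ 0 := by
    intro z hz i
    have hy : ∀ i, Function.extend f z 0 (f i) = z i := fun i => hf.extend_apply _ _ _
    have hy0 : ∀ w, w ∉ Set.range f → Function.extend f z 0 w = 0 := by
      intro w hw
      rw [Function.extend_apply' _ _ _ (by simpa using hw)]
      rfl
    rw [← hy i]
    apply ring_max_principle L hL _ s (hy0 s (by rintro ⟨i, hi⟩; exact hs i hi))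
    intro w hw
    by_cases hwr : w ∈ Set.range f
    · obtain ⟨a, rfl⟩ := hwr
      have := congrFun hz a
      simp only [Matrix.mulVec, dotProduct, Matrix.submatrix_apply, Pi.zero_apply] at this
      rw [← this]
      symm
      apply Fintype.sum_of_injective f hf
      · intro w hw
        rw [hy0 w hw, mul_zero]
      · intro b; rw [hy]
    · exact absurd (hy0 w hwr) hw
  apply hx0
  funext i
  have h1 := key x hx i
  have h2 := key (-x) (by rw [Matrix.mulVec_neg, hx, neg_zero]) i
  simp only [Pi.neg_apply, Pi.zero_apply] at h2 ⊢
  linarith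

lemma fin_sub_val {N : ℕ} (p q : Fin N) :
    (p - q).val = if q.val ≤ p.val then p.val - q.val else p.val + N - q.val := by
  have hp := p.isLt
  have hq := q.isLt
  rw [Fin.val_sub]
  split_ifs with h
  · rw [show N - q.val + p.val = (p.val - q.val) + N by omega, Nat.add_mod_right,
      Nat.mod_eq_of_lt (by omega)]
  · rw [Nat.mod_eq_of_lt (by omega)]; omega

lemma cseg_mem_iff {n j : ℕ} (u : Fin (j + 1) → Fin (n + 3))
    (hu : StrictMono fun i : Fin (j + 1) => (u i - u 0).val) (i : Fin (j + 1))
    (w : Fin (n + 3)) :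
    (0 < (w - u i).val ∧ (u (i + 1) = u i ∨ (w - u i).val < (u (i + 1) - u i).val)) ↔
    ((u i - u 0).val < (w - u 0).val ∧ ∀ i', i < i' → (w - u 0).val < (u i' - u 0).val) := by
  have e1 : w - u i = (w - u 0) - (u i - u 0) := (sub_sub_sub_cancel_right _ _ _).symm
  have e2 : u (i + 1) - u i = (u (i + 1) - u 0) - (u i - u 0) := (sub_sub_sub_cancel_right _ _ _).symm
  have e3 : u (i + 1) = u i ↔ (u (i + 1) - u 0).val = (u i - u 0).val := by
    rw [← Fin.ext_iff]; exact (sub_left_inj).symm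
  rw [e3, e1, e2, fin_sub_val (w - u 0), fin_sub_val (u (i + 1) - u 0)]
  have hw := (w - u 0).isLt
  have hi := (u i - u 0).isLt
  have hi' := (u (i + 1) - u 0).isLt
  by_cases hlast : i = Fin.last j
  · have h0 : u (i + 1) - u 0 = 0 := by rw [hlast, Fin.last_add_one, sub_self]
    have hvac : ∀ i', i < i' → (w - u 0).val < (u i' - u 0).val := by
      intro i' h; subst hlast; exact absurd h (not_lt.2 (Fin.le_last _))
    have h0v : (u (i + 1) - u 0).val = 0 := by rw [h0]; rfl
    have hiff := iff_true_intro hvac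
    rw [hiff, and_true, h0v]
    clear hiff hvac e1 e2 e3 h0 h0v hi'
    generalize (w - u 0).val = d at *
    generalize (u i - u 0).val = c at *
    split_ifs <;> omega
  · have hlt : i < i + 1 := by
      rw [Fin.lt_add_one_iff]; exact Fin.lt_last_iff_ne_last.2 hlast
    have ha := hu hlt
    have hall : (∀ i', i < i' → (w - u 0).val < (u i' - u 0).val) ↔
        (w - u 0).val < (u (i + 1) - u 0).val := by
      constructor
      · intro h; exact h _ hlt
      · intro h i' hi'
        exact lt_of_lt_of_le h (hu.monotone (Fin.add_one_le_of_lt hi'))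
    rw [hall]
    simp only at ha
    split_ifs <;> omega

lemma seg_zero {n j : ℕ} (L : Matrix (Fin (n + 3)) (Fin (n + 3)) ℝ) (hL : IsRingLaplacian L)
    (u : Fin (j + 1) → Fin (n + 3)) (i i' : Fin (j + 1)) (hii : i < i')
    (w w' : Fin (n + 3))
    (hw : (u i - u 0).val < (w - u 0).val ∧ ∀ l, i < l → (w - u 0).val < (u l - u 0).val)
    (hw' : (u i' - u 0).val < (w' - u 0).val ∧ ∀ l, i' < l → (w' - u 0).val < (u l - u 0).val) :
    L w w' = 0 := by
  have h1 := hw.2 i' hii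
  have h2 := hw'.1
  have hlt := (w - u 0).isLt
  have hlt' := (w' - u 0).isLt
  have hpos : 0 < (w - u 0).val := by have := hw.1; omega
  have hone : ((1 : Fin (n + 3))).val = 1 := rfl
  have hsub := fin_sub_val (w' - u 0) (w - u 0)
  have hsub2 := fin_sub_val (w - u 0) (w' - u 0)
  rw [show (w' - u 0) - (w - u 0) = w' - w from sub_sub_sub_cancel_right _ _ _, if_pos (by omega)] at hsub
  rw [show (w - u 0) - (w' - u 0) = w - w' from sub_sub_sub_cancel_right _ _ _, if_neg (by omega)] at hsub2
  apply hL.2.2.1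
  · rintro rfl; omega
  · rintro h
    rw [h, add_sub_cancel_left, ← h] at hsub
    omega
  · intro h
    rw [h, sub_sub_cancel, ← h] at hsub2
    omega

lemma trace_value {n j : ℕ} (L : Matrix (Fin (n + 3)) (Fin (n + 3)) ℝ) (hL : IsRingLaplacian L)
    (u : Fin (j + 1) → Fin (n + 3))
    (hu : StrictMono fun i : Fin (j + 1) => (u i - u 0).val)
    (S : Finset (Fin (n + 3))) (hS : ∀ w, w ∈ S ↔ ∃ i, u i = w) :
    (1 / 2) * ((grounded L S)⁻¹).trace =
      ∑ i : Fin (j + 1), (1 / 2) * ((cseg L (u i) (u (i + 1)))⁻¹).trace := by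
  have hmem : ∀ (i) (w : CSegIdx (u i) (u (i + 1))), (u i - u 0).val < (w.val - u 0).val ∧
      ∀ l, i < l → (w.val - u 0).val < (u l - u 0).val :=
    fun i w => (cseg_mem_iff u hu i w.val).1 w.property
  have hnot : ∀ (i) (w : CSegIdx (u i) (u (i + 1))), w.val ∉ S := by
    intro i w hw
    obtain ⟨l, hl⟩ := (hS _).1 hw
    have h := hmem i w
    rw [← hl] at h
    have := h.2 l (hu.lt_iff_lt.1 h.1)
    exact lt_irrefl _ this
  let g : (Σ i : Fin (j + 1), CSegIdx (u i) (u (i + 1))) → {w : Fin (n + 3) // w ∉ S} :=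
    fun p => ⟨p.2.val, hnot p.1 p.2⟩
  have hg : Function.Bijective g := by
    constructor
    · rintro ⟨i, w⟩ ⟨i', w'⟩ h
      have hww : w.val = w'.val := congrArg Subtype.val h
      have h1 := hmem i w
      have h2 := hmem i' w'
      rw [hww] at h1
      have : i = i' := by
        rcases lt_trichotomy i i' with h | h | h
        · exact absurd (h1.2 i' h) (not_lt.2 h2.1.le)
        · exact h
        · exact absurd (h2.2 i h) (not_lt.2 h1.1.le)
      subst this
      congr 1
      exact Subtype.ext hww
    · rintro ⟨w, hw⟩
      let T : Finset (Fin (j + 1)) := Finset.univ.filter fun i => (u i - u 0).val ≤ (w - u 0).val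
      have hT : T.Nonempty := ⟨0, by simp [T]⟩
      have hm := Finset.max'_mem T hT
      have hm2 : ∀ l ∈ T, l ≤ T.max' hT := fun l hl => Finset.le_max' T l hl
      generalize T.max' hT = i at hm hm2
      have hi : (u i - u 0).val ≤ (w - u 0).val := by simpa [T] using hm
      have hne : (u i - u 0).val ≠ (w - u 0).val := by
        intro h
        exact hw ((hS w).2 ⟨i, sub_left_inj.1 (Fin.ext h)⟩)
      have hp := (cseg_mem_iff u hu i w).2 ⟨lt_of_le_of_ne hi hne, by
        intro l hl
        by_contra hcon
        have : l ∈ T := by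
          rw [Finset.mem_filter]
          exact ⟨Finset.mem_univ _, not_lt.1 hcon⟩
        exact absurd (hm2 l this) (not_le.2 hl)⟩
      exact ⟨⟨i, ⟨w, hp⟩⟩, rfl⟩
  let e := Equiv.ofBijective g hg
  have hunit : ∀ i, IsUnit (cseg L (u i) (u (i + 1))).det := by
    intro i
    apply ring_sub_isUnit L hL _ Subtype.val_injective (u i)
    intro w hw
    have := (hmem i w).1
    rw [hw] at this
    exact lt_irrefl _ this
  have hblock : (grounded L S).submatrix e e =
      Matrix.blockDiagonal' fun i => cseg L (u i) (u (i + 1)) := by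
    ext ⟨i, w⟩ ⟨i', w'⟩
    rw [Matrix.blockDiagonal'_apply]
    change L w.val w'.val = _
    split_ifs with h
    · simp only at h
      subst h
      rfl
    · rcases lt_or_gt_of_ne h with h | h
      · exact seg_zero L hL u i i' h _ _ (hmem i w) (hmem i' w')
      · rw [← hL.1.apply]
        exact seg_zero L hL u i' i h _ _ (hmem i' w') (hmem i w)
  have hinv : (Matrix.blockDiagonal' fun i => cseg L (u i) (u (i + 1)))⁻¹ =
      Matrix.blockDiagonal' fun i => (cseg L (u i) (u (i + 1)))⁻¹ := by
    apply Matrix.inv_eq_right_inv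
    rw [← Matrix.blockDiagonal'_mul, ← Matrix.blockDiagonal'_one]
    congr 1
    funext i
    exact Matrix.mul_nonsing_inv _ (hunit i)
  have htr : ((grounded L S)⁻¹).trace = (((grounded L S).submatrix e e)⁻¹).trace := by
    rw [Matrix.inv_submatrix_equiv]
    exact (Equiv.sum_comp e fun w => (grounded L S)⁻¹ w w).symm
  rw [htr, hblock, hinv, Matrix.trace_blockDiagonal', Finset.mul_sum]

lemma exists_enum {n : ℕ} (S : Finset (Fin (n + 3))) (hS : S.Nonempty) :
    ∃ j : ℕ, j + 1 = S.card ∧ ∃ u : Fin (j + 1) → Fin (n + 3),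
      (StrictMono fun i : Fin (j + 1) => (u i - u 0).val) ∧ ∀ w, w ∈ S ↔ ∃ i, u i = w := by
  obtain ⟨s, hs⟩ := hS
  obtain ⟨j, hj⟩ : ∃ j, S.card = j + 1 :=
    Nat.exists_eq_succ_of_ne_zero (Finset.card_ne_zero_of_mem hs)
  have hT : (S.image (· - s)).card = j + 1 := by
    rw [Finset.card_image_of_injective _ (sub_left_injective), hj]
  let t := (S.image (· - s)).orderEmbOfFin hT
  have hr : ∀ x, x ∈ S.image (· - s) ↔ ∃ i, t i = x := by
    intro x
    have := Finset.range_orderEmbOfFin (S.image (· - s)) hT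
    rw [← Finset.mem_coe, ← this]
    rfl
  have ht0 : t 0 = 0 := by
    obtain ⟨i, hi⟩ := (hr 0).1 (Finset.mem_image.2 ⟨s, hs, sub_self s⟩)
    have h : t 0 ≤ t i := t.monotone (Fin.zero_le i)
    rw [hi] at h
    exact Fin.le_zero_iff.1 h
  refine ⟨j, hj.symm, fun i => t i + s, ?_, ?_⟩
  · intro a b hab
    simp only [ht0, zero_add, add_sub_cancel_right]
    exact t.strictMono hab
  · intro w
    have h1 : w ∈ S ↔ w - s ∈ S.image (· - s) := by
      simp
    rw [h1, hr]
    simp only [eq_sub_iff_add_eq]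

/-- for a weighted ring Laplacian on `n + 3` vertices and `1 ≤ k ≤ n + 3`,
the minimum of `(1/2)·tr(L_ff⁻¹)` over all nonempty leader sets `S` with `|S| ≤ k` equals
the minimum over all `j ∈ {1,…,k}` (written `j'+1 ≤ k`) and all families of `j'+1`
distinct vertices listed in clockwise cyclic order of the sum of the cyclic segment
contributions. -/
theorem ring_coherence_leader_selection {n k : ℕ} (hk1 : 1 ≤ k) (hkn : k ≤ n + 3)
    (L : Matrix (Fin (n + 3)) (Fin (n + 3)) ℝ) (hL : IsRingLaplacian L) :
    sInf { x : ℝ | ∃ S : Finset (Fin (n + 3)), S.Nonempty ∧ S.card ≤ k ∧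
        x = (1 / 2) * ((grounded L S)⁻¹).trace } =
    sInf { x : ℝ | ∃ j : ℕ, j + 1 ≤ k ∧ ∃ u : Fin (j + 1) → Fin (n + 3),
        (StrictMono fun i : Fin (j + 1) => (u i - u 0).val) ∧
        x = ∑ i : Fin (j + 1), (1 / 2) * ((cseg L (u i) (u (i + 1)))⁻¹).trace } := by
  congr 1
  ext x
  constructor
  · rintro ⟨S, hne, hcard, rfl⟩
    obtain ⟨j, hj, u, hu, hS⟩ := exists_enum S hne
    exact ⟨j, by omega, u, hu, trace_value L hL u hu S hS⟩
  · rintro ⟨j, hj, u, hu, rfl⟩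
    refine ⟨Finset.univ.image u, ⟨u 0, by simp⟩, ?_, ?_⟩
    · exact (Finset.card_image_le.trans (by simp)).trans hj
    · exact (trace_value L hL u hu _ (by simp)).symm
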